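/- Let μ be a Borel probability measure on ℝ₊ = [0, +∞) and let λ ∈ ℂ ∖ {0} be such that 1/λ ∉ supp(μ) and ψ_μ(λ) ≠ −1, where ψ_μ(λ) = ∫_{ℝ₊} λt/(1 − λt) dμ(t). Set m₁ = ∫_{ℝ₊} (1 − λt)⁻¹ dμ(t) and m₂ = ∫_{ℝ₊} (1 − λt)⁻² dμ(t), and define k_μ(z) = η_μ(z)/z with η_μ = ψ_μ/(1 + ψ_μ). Then k_μ is complex-differentiable at λ and k_μ′(λ) = (m₂ − m₁²) / (λ²·(ψ_μ(λ) + 1)²). -/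

import Mathlib

/-!
In the variable `w = 1/z`, everything is expressed through the Cauchy transform
`G(w) = ∫ (w - t)⁻¹ dμ(t)`: one has `1 + ψ_μ(z) = w G(w)`, so that `k_μ(z) = w - 1/G(w)`.
Off the support of `μ` the kernel `(w - t)⁻¹` and its derivative are bounded, locally uniformly
in `w`, so `G' = -∫ (w - t)⁻² dμ(t)`, and the chain rule gives
`k_μ'(z) = -w² (1 + G'(w)/G(w)²)`. Finally `m₂ = -w² G'(w)` and `m₁ = w G(w)`.
-/

open MeasureTheory

/-- The topological support of a measure: the set of points all of whose neighborhoods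
have positive measure. -/
def Measure.msupport {α : Type*} [TopologicalSpace α] {m : MeasurableSpace α}
    (μ : Measure α) : Set α :=
  {x | ∀ U ∈ nhds x, 0 < μ U}

open Filter Topology Metric

section Support

variable {X Y : Type*} [MeasurableSpace X] [MeasurableSpace Y]

lemma exists_pos_ae_le_dist_of_notMem_support [PseudoMetricSpace X] {μ : Measure X} {x : X}
    (hx : x ∉ μ.support) : ∃ r > 0, ∀ᵐ t ∂μ, r ≤ dist t x := by
  obtain ⟨U, hU, hμU⟩ := Measure.notMem_support_iff_exists.1 hx
  obtain ⟨r, hr, hrU⟩ := Metric.mem_nhds_iff.1 hU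
  refine ⟨r, hr, ?_⟩
  filter_upwards [measure_eq_zero_iff_ae_notMem.1 hμU] with t ht
  exact not_lt.1 fun hlt => ht (hrU hlt)

lemma support_map_subset_image_of_isClosedMap [TopologicalSpace X] [HereditarilyLindelofSpace X]
    [TopologicalSpace Y] [OpensMeasurableSpace Y] {μ : Measure X} {f : X → Y}
    (hf : AEMeasurable f μ) (hclosed : IsClosedMap f) :
    (μ.map f).support ⊆ f '' μ.support := by
  have himage : IsClosed (f '' μ.support) := hclosed _ Measure.isClosed_support
  refine Measure.support_subset_of_isClosed himage ?_
  rw [mem_ae_map_iff hf himage.measurableSet]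
  exact mem_of_superset Measure.support_mem_ae (Set.subset_preimage_image f _)

lemma msupport_eq_support [TopologicalSpace X] (μ : Measure X) :
    Measure.msupport μ = μ.support :=
  Set.ext fun x => (Measure.mem_support_iff_forall x).symm

end Support

variable {𝕜 : Type*} [RCLike 𝕜] [MeasurableSpace 𝕜]

section CauchyTransform

/-- The Cauchy (or Stieltjes) transform `G_μ(w) = ∫ (w - t)⁻¹ dμ(t)`, which carries all the
analysis below. -/
noncomputable def cauchyTransform (μ : Measure 𝕜) (w : 𝕜) : 𝕜 :=
  ∫ t, (w - t)⁻¹ ∂μ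

variable [BorelSpace 𝕜] {μ : Measure 𝕜} [IsFiniteMeasure μ] {w : 𝕜}

lemma integrable_inv_sub_of_notMem_support (hw : w ∉ μ.support) :
    Integrable (fun t => (w - t)⁻¹) μ := by
  obtain ⟨r, hr, hdist⟩ := exists_pos_ae_le_dist_of_notMem_support hw
  refine Integrable.of_bound (by fun_prop) r⁻¹ (hdist.mono fun t ht => ?_)
  rw [norm_inv, ← dist_eq_norm']
  exact inv_anti₀ hr ht

lemma hasDerivAt_cauchyTransform (hw : w ∉ μ.support) :
    HasDerivAt (cauchyTransform μ) (-∫ t, ((w - t) ^ 2)⁻¹ ∂μ) w := by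
  obtain ⟨r, hr, hdist⟩ := exists_pos_ae_le_dist_of_notMem_support hw
  have hlower : ∀ᵐ t ∂μ, ∀ v ∈ ball w (r / 2), r / 2 ≤ ‖v - t‖ := by
    filter_upwards [hdist] with t ht v hv
    rw [← dist_eq_norm']
    linarith [dist_triangle t v w, mem_ball.1 hv]
  rw [← integral_neg]
  refine (hasDerivAt_integral_of_dominated_loc_of_deriv_le
    (F := fun v t => (v - t)⁻¹) (F' := fun v t => -((v - t) ^ 2)⁻¹)
    (bound := fun _ => ((r / 2) ^ 2)⁻¹) (ball_mem_nhds w (half_pos hr))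
    (.of_forall fun v => by fun_prop) (integrable_inv_sub_of_notMem_support hw)
    (by fun_prop) ?_ (integrable_const _) ?_).2
  · filter_upwards [hlower] with t ht v hv
    rw [norm_neg, norm_inv, norm_pow]
    gcongr
    exact ht v hv
  · filter_upwards [hlower] with t ht v hv
    have hvt : v - t ≠ 0 := norm_pos_iff.1 ((half_pos hr).trans_le (ht v hv))
    exact (hasDerivAt_inv hvt).comp_sub_const v t

end CauchyTransform

section MomentTransforms

/-- The moment transform `ψ_μ(z) = ∫ zt / (1 - zt) dμ(t)`, for measures on the whole field. -/
noncomputable def psiTransform (μ : Measure 𝕜) (z : 𝕜) : 𝕜 :=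
  ∫ t, z * t / (1 - z * t) ∂μ

/-- The transform `k_μ(z) = η_μ(z) / z` with `η_μ = ψ_μ / (1 + ψ_μ)`; it takes the junk value `0`
where `z = 0` or `ψ_μ(z) = -1`. -/
noncomputable def kTransform (μ : Measure 𝕜) (z : 𝕜) : 𝕜 :=
  psiTransform μ z / (1 + psiTransform μ z) / z

variable {μ : Measure 𝕜} {z : 𝕜}

lemma one_sub_mul_eq_mul_inv_sub {K : Type*} [Field K] {a : K} (ha : a ≠ 0) (b : K) :
    1 - a * b = a * (a⁻¹ - b) := by
  rw [mul_sub, mul_inv_cancel₀ ha]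

lemma integral_inv_one_sub_mul_pow (hz : z ≠ 0) (n : ℕ) :
    ∫ t, ((1 - z * t) ^ n)⁻¹ ∂μ = (z⁻¹) ^ n * ∫ t, ((z⁻¹ - t) ^ n)⁻¹ ∂μ := by
  simp only [one_sub_mul_eq_mul_inv_sub hz, mul_pow, mul_inv, inv_pow, integral_const_mul]

lemma integral_inv_one_sub_mul (hz : z ≠ 0) :
    ∫ t, (1 - z * t)⁻¹ ∂μ = z⁻¹ * cauchyTransform μ z⁻¹ := by
  simpa only [pow_one, cauchyTransform] using integral_inv_one_sub_mul_pow (μ := μ) hz 1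

variable [BorelSpace 𝕜]

lemma psiTransform_eq_sub_measureReal_univ [IsFiniteMeasure μ] (hz : z ≠ 0)
    (hsupp : z⁻¹ ∉ μ.support) :
    psiTransform μ z = z⁻¹ * cauchyTransform μ z⁻¹ - μ.real Set.univ := by
  obtain ⟨r, hr, hdist⟩ := exists_pos_ae_le_dist_of_notMem_support hsupp
  have hkernel : ∀ᵐ t ∂μ, z * t / (1 - z * t) = z⁻¹ * (z⁻¹ - t)⁻¹ - 1 := by
    filter_upwards [hdist] with t ht
    have hzt : z⁻¹ - t ≠ 0 := sub_ne_zero.2 (dist_pos.1 (hr.trans_le ht)).symm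
    have hfactor := one_sub_mul_eq_mul_inv_sub hz t
    have hne : 1 - z * t ≠ 0 := hfactor ▸ mul_ne_zero hz hzt
    calc z * t / (1 - z * t) = (1 - z * t)⁻¹ - 1 := by field_simp; ring
      _ = z⁻¹ * (z⁻¹ - t)⁻¹ - 1 := by rw [hfactor, mul_inv]
  have hint := (integrable_inv_sub_of_notMem_support hsupp).const_mul z⁻¹
  rw [psiTransform, integral_congr_ae hkernel, integral_sub hint (integrable_const 1),
    integral_const_mul, cauchyTransform, integral_const, RCLike.real_smul_eq_coe_mul, mul_one]

variable [IsProbabilityMeasure μ]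

lemma psiTransform_add_one (hz : z ≠ 0) (hsupp : z⁻¹ ∉ μ.support) :
    psiTransform μ z + 1 = z⁻¹ * cauchyTransform μ z⁻¹ := by
  rw [psiTransform_eq_sub_measureReal_univ hz hsupp, probReal_univ, RCLike.ofReal_one,
    sub_add_cancel]

lemma kTransform_eq_inv_sub_inv_cauchyTransform (hz : z ≠ 0) (hsupp : z⁻¹ ∉ μ.support)
    (hG : cauchyTransform μ z⁻¹ ≠ 0) :
    kTransform μ z = z⁻¹ - (cauchyTransform μ z⁻¹)⁻¹ := by
  have hψ := psiTransform_add_one hz hsupp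
  rw [kTransform, add_comm 1, hψ, eq_sub_of_add_eq hψ]
  generalize cauchyTransform μ z⁻¹ = G at hG ⊢
  field_simp

lemma kTransform_eventuallyEq (hz : z ≠ 0) (hsupp : z⁻¹ ∉ μ.support)
    (hG : cauchyTransform μ z⁻¹ ≠ 0) :
    kTransform μ =ᶠ[𝓝 z] fun v => v⁻¹ - (cauchyTransform μ v⁻¹)⁻¹ := by
  have hinv : Tendsto (·⁻¹) (𝓝 z) (𝓝 z⁻¹) := tendsto_inv₀ hz
  filter_upwards [eventually_ne_nhds hz,
    hinv.eventually (Measure.isOpen_compl_support.mem_nhds hsupp),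
    hinv.eventually ((hasDerivAt_cauchyTransform hsupp).continuousAt.eventually_ne hG)]
    with v hv hvsupp hvG
  exact kTransform_eq_inv_sub_inv_cauchyTransform hv hvsupp hvG

theorem hasDerivAt_kTransform (hz : z ≠ 0) (hsupp : z⁻¹ ∉ μ.support)
    (hG : cauchyTransform μ z⁻¹ ≠ 0) :
    HasDerivAt (kTransform μ)
      ((z⁻¹) ^ 2 * ((∫ t, ((z⁻¹ - t) ^ 2)⁻¹ ∂μ) / cauchyTransform μ z⁻¹ ^ 2 - 1)) z := by
  have hinv := hasDerivAt_inv hz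
  have hcomp := (hasDerivAt_cauchyTransform hsupp).comp z hinv
  refine HasDerivAt.congr_of_eventuallyEq ?_ (kTransform_eventuallyEq hz hsupp hG)
  refine (hinv.sub (hcomp.inv hG)).congr_deriv ?_
  simp only [Function.comp_apply]
  ring

theorem k_deriv_formula_general (hz : z ≠ 0) (hsupp : z⁻¹ ∉ μ.support)
    (hψ : psiTransform μ z ≠ -1) :
    HasDerivAt (kTransform μ)
      (((∫ t, ((1 - z * t) ^ 2)⁻¹ ∂μ) - (∫ t, (1 - z * t)⁻¹ ∂μ) ^ 2) /
        (z ^ 2 * (psiTransform μ z + 1) ^ 2)) z := by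
  have hm₁ : z⁻¹ * cauchyTransform μ z⁻¹ ≠ 0 := by
    rwa [← psiTransform_add_one hz hsupp, ne_eq, add_eq_zero_iff_eq_neg]
  have hG : cauchyTransform μ z⁻¹ ≠ 0 := right_ne_zero_of_mul hm₁
  refine (hasDerivAt_kTransform hz hsupp hG).congr_deriv ?_
  rw [psiTransform_add_one hz hsupp, integral_inv_one_sub_mul hz,
    integral_inv_one_sub_mul_pow hz]
  generalize cauchyTransform μ z⁻¹ = G at hG ⊢
  generalize ∫ t, ((z⁻¹ - t) ^ 2)⁻¹ ∂μ = I
  field_simp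

end MomentTransforms

section RealMeasure

lemma integral_map_ofReal {E : Type*} [NormedAddCommGroup E] [NormedSpace ℝ E] (μ : Measure ℝ)
    (g : ℂ → E) : ∫ w, g w ∂(μ.map ((↑) : ℝ → ℂ)) = ∫ t : ℝ, g t ∂μ :=
  Complex.isometry_ofReal.isClosedEmbedding.measurableEmbedding.integral_map g

lemma psiTransform_map_ofReal (μ : Measure ℝ) (z : ℂ) :
    psiTransform (μ.map ((↑) : ℝ → ℂ)) z = ∫ t : ℝ, z * t / (1 - z * t) ∂μ :=
  integral_map_ofReal μ _

lemma kTransform_map_ofReal (μ : Measure ℝ) :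
    kTransform (μ.map ((↑) : ℝ → ℂ)) = fun z : ℂ =>
      ((∫ t : ℝ, z * t / (1 - z * t) ∂μ) / (1 + ∫ t : ℝ, z * t / (1 - z * t) ∂μ)) / z :=
  funext fun z => by rw [kTransform, psiTransform_map_ofReal]

lemma notMem_support_map_ofReal {μ : Measure ℝ} {w : ℂ}
    (hw : ∀ t ∈ Measure.msupport μ, (t : ℂ) ≠ w) :
    w ∉ (μ.map ((↑) : ℝ → ℂ)).support := by
  intro hmem
  obtain ⟨t, ht, rfl⟩ := support_map_subset_image_of_isClosedMap
    Complex.measurable_ofReal.aemeasurable Complex.isometry_ofReal.isClosedEmbedding.isClosedMap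
    hmem
  exact hw t (msupport_eq_support μ ▸ ht) rfl

end RealMeasure

/-- Derivative of `k_μ = η_μ(z)/z` where `η_μ = ψ_μ/(1+ψ_μ)` and
`ψ_μ(z) = ∫ zt/(1-zt) dμ(t)`, for a probability measure `μ` on `ℝ₊`, at a point
`λ ≠ 0` with `1/λ ∉ supp(μ)` and `ψ_μ(λ) ≠ -1`:
`k_μ'(λ) = (m₂ - m₁²)/(λ²(ψ_μ(λ)+1)²)` with `m₁ = ∫ (1-λt)⁻¹ dμ`, `m₂ = ∫ (1-λt)⁻² dμ`. -/
theorem k_deriv_formula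
    (μ : Measure ℝ) [IsProbabilityMeasure μ]
    (hpos : Measure.msupport μ ⊆ Set.Ici 0)
    (lam : ℂ) (hlam : lam ≠ 0)
    (hs : ∀ t ∈ Measure.msupport μ, (t : ℂ) ≠ lam⁻¹)
    (hpsi : (∫ t : ℝ, lam * t / (1 - lam * t) ∂μ) ≠ -1) :
    HasDerivAt
      (fun z : ℂ =>
        ((∫ t : ℝ, z * t / (1 - z * t) ∂μ) / (1 + ∫ t : ℝ, z * t / (1 - z * t) ∂μ)) / z)
      (((∫ t : ℝ, ((1 - lam * t : ℂ)^2)⁻¹ ∂μ) - (∫ t : ℝ, (1 - lam * t : ℂ)⁻¹ ∂μ)^2) /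
        (lam^2 * ((∫ t : ℝ, lam * t / (1 - lam * t) ∂μ) + 1)^2)) lam := by
  have := Measure.isProbabilityMeasure_map (μ := μ) Complex.measurable_ofReal.aemeasurable
  simpa only [kTransform_map_ofReal, psiTransform_map_ofReal, integral_map_ofReal] using
    k_deriv_formula_general hlam (notMem_support_map_ofReal hs)
      ((psiTransform_map_ofReal μ lam).trans_ne hpsi)
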